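/- Let X₁, X₂ be disjoint finite sets with |X₁| = n₁, |X₂| = n₂. Let positive integers kᵢ, ℓᵢ (1 ≤ i ≤ m) be given and set b = max over i of max(kᵢ, ℓᵢ). Suppose 9b² ≤ n₁ and 9b² ≤ n₂. If F is an intersecting family of subsets of X₁ ∪ X₂ such that each F ∈ F satisfies |F ∩ X₁| = kᵢ and |F ∩ X₂| = ℓᵢ for some i, then |F| ≤ max( Σᵢ C(n₁,kᵢ)·C(n₂−1,ℓᵢ−1) , Σᵢ C(n₁−1,kᵢ−1)·C(n₂,ℓᵢ) ). -/

import Mathlib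

/-- Necessary condition for two arcs on a cycle to meet. -/
def ArcNear (n : ℕ) (a : ZMod n) (k : ℕ) (a' : ZMod n) (k' : ℕ) : Prop :=
  ∃ d : ℤ, (d : ZMod n) = a' - a ∧ -(k' : ℤ) < d ∧ d < k

lemma linear_cross (R S : Finset ℤ) (k k' : ℕ) (hk' : 0 < k')
    (h : ∀ r ∈ R, ∀ s ∈ S, -(k' : ℤ) < s - r ∧ s - r < k) (hR : k < R.card) :
    S.card ≤ k' - 1 := by
  rcases S.eq_empty_or_nonempty with rfl | hS
  · simp
  have hRn : R.Nonempty := Finset.card_pos.mp (by omega)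
  have hR1 : R ⊆ Finset.Icc (R.min' hRn) (R.max' hRn) := fun x hx =>
    Finset.mem_Icc.mpr ⟨R.min'_le x hx, R.le_max' x hx⟩
  have hS1 : S ⊆ Finset.Icc (S.min' hS) (S.max' hS) := fun x hx =>
    Finset.mem_Icc.mpr ⟨S.min'_le x hx, S.le_max' x hx⟩
  have c1 := Finset.card_le_card hR1
  have c2 := Finset.card_le_card hS1
  rw [Int.card_Icc] at c1 c2
  have e1 := h _ (R.max'_mem hRn) _ (S.min'_mem hS)
  have e2 := h _ (R.min'_mem hRn) _ (S.max'_mem hS)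
  have e3 := R.min'_le _ (R.max'_mem hRn)
  have e4 := S.min'_le _ (S.max'_mem hS)
  omega

open Classical in
lemma torus_strip {m n₁ n₂ b : ℕ} [NeZero n₁] [NeZero n₂] (k ℓ : Fin m → ℕ)
    (hkpos : ∀ i, 0 < k i)
    (hkb : ∀ i, k i ≤ b) (hlb : ∀ i, ℓ i ≤ b)
    (h1 : 9 * b ^ 2 ≤ n₁) (h2 : 9 * b ^ 2 ≤ n₂)
    (G : Fin m → ZMod n₁ → ZMod n₂ → Prop)
    (hG : ∀ i j a c a' c', G i a c → G j a' c' →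
      ArcNear n₁ a (k i) a' (k j) ∨ ArcNear n₂ c (ℓ i) c' (ℓ j))
    (a₀ : ZMod n₁)
    (hs : ∀ i a c, G i a c → ∃ d : ℤ, (d : ZMod n₁) = a - a₀ ∧ -(2 * b : ℤ) < d ∧ d < 2 * b)
    (j : Fin m) :
    (Finset.univ.filter (fun p : ZMod n₁ × ZMod n₂ => G j p.1 p.2)).card ≤ k j * n₂ := by
  have hb1 : 1 ≤ b := (hkpos j).trans_le (hkb j)
  have hbb : b ≤ b ^ 2 := by nlinarith
  let R : Fin m → ZMod n₂ → Finset ℤ := fun i c =>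
    (Finset.Ioo (-(2 * b : ℤ)) (2 * b)).filter (fun d => G i (a₀ + d) c)
  have hcount : (Finset.univ.filter (fun p : ZMod n₁ × ZMod n₂ => G j p.1 p.2)).card
      ≤ ∑ c, (R j c).card := by
    rw [Finset.card_eq_sum_card_fiberwise (f := Prod.snd) (t := Finset.univ) (by simp)]
    apply Finset.sum_le_sum
    intro c _
    refine (Finset.card_le_card (t := (R j c).image (fun d : ℤ => (a₀ + (d : ZMod n₁), c))) ?_).trans
      Finset.card_image_le
    rintro ⟨a, c'⟩ h
    simp only [Finset.mem_filter, Finset.mem_univ, true_and] at h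
    obtain ⟨h, rfl⟩ := h
    obtain ⟨d, hd, h3, h4⟩ := hs _ _ _ h
    refine Finset.mem_image.mpr ⟨d, ?_, ?_⟩
    · simp only [R, Finset.mem_filter, Finset.mem_Ioo]
      refine ⟨⟨h3, h4⟩, ?_⟩
      rw [hd]; simpa using h
    · rw [hd]; simp
  refine hcount.trans ?_
  by_cases hbig : ∃ i c, k i < (R i c).card
  · obtain ⟨i, c, hic⟩ := hbig
    have hrow : ∀ c', (R j c').card ≤ (k j - 1) + if ArcNear n₂ c (ℓ i) c' (ℓ j) then 4 * b else 0 := by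
      intro c'
      split_ifs with hn
      · have : (R j c').card ≤ _ := Finset.card_filter_le _ _
        rw [Int.card_Ioo] at this
        omega
      · rw [add_zero]
        refine linear_cross (R i c) (R j c') (k i) (k j) (hkpos j) ?_ hic
        intro r hr s hs'
        simp only [R, Finset.mem_filter, Finset.mem_Ioo] at hr hs'
        obtain ⟨d, hd, h3, h4⟩ := (hG _ _ _ _ _ _ hr.2 hs'.2).resolve_right hn
        have : ((d - (s - r) : ℤ) : ZMod n₁) = 0 := by push_cast; rw [hd]; ring
        rw [ZMod.intCast_zmod_eq_zero_iff_dvd] at this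
        have hki := hkb i
        have hkj := hkb j
        have := Int.eq_zero_of_abs_lt_dvd this (by rw [abs_lt]; constructor <;> omega)
        have : s - r = d := by omega
        rw [this]; exact ⟨h3, h4⟩
    have hnear : (Finset.univ.filter (fun c' => ArcNear n₂ c (ℓ i) c' (ℓ j))).card ≤ 2 * b := by
      have : (Finset.univ.filter (fun c' => ArcNear n₂ c (ℓ i) c' (ℓ j))) ⊆
          (Finset.Ioo (-(ℓ j : ℤ)) (ℓ i)).image (fun d : ℤ => c + (d : ZMod n₂)) := by
        intro c' hc'
        obtain ⟨d, hd, h3, h4⟩ := (Finset.mem_filter.mp hc').2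
        refine Finset.mem_image.mpr ⟨d, Finset.mem_Ioo.mpr ⟨h3, h4⟩, ?_⟩
        rw [hd]; ring
      have := (Finset.card_le_card this).trans Finset.card_image_le
      rw [Int.card_Ioo] at this
      have := hlb i
      have := hlb j
      omega
    calc ∑ c', (R j c').card ≤ ∑ c', ((k j - 1) + if ArcNear n₂ c (ℓ i) c' (ℓ j) then 4 * b else 0) :=
          Finset.sum_le_sum (fun c' _ => hrow c')
      _ = n₂ * (k j - 1) + (Finset.univ.filter (fun c' => ArcNear n₂ c (ℓ i) c' (ℓ j))).card * (4 * b) := by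
          rw [Finset.sum_add_distrib, ← Finset.sum_filter]
          simp [ZMod.card]
      _ ≤ n₂ * (k j - 1) + (2 * b) * (4 * b) := by gcongr
      _ ≤ n₂ * (k j - 1) + n₂ := by nlinarith
      _ = k j * n₂ := by
          obtain ⟨t, ht⟩ : ∃ t, k j = t + 1 := ⟨k j - 1, by have := hkpos j; omega⟩
          rw [ht]; simp; ring
  · push Not at hbig
    calc ∑ c, (R j c).card ≤ ∑ _c : ZMod n₂, k j := Finset.sum_le_sum (fun c _ => hbig j c)
      _ = k j * n₂ := by simp [ZMod.card, mul_comm]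

open Classical in
lemma torus_main {m n₁ n₂ b : ℕ} [NeZero n₁] [NeZero n₂] (k ℓ : Fin m → ℕ)
    (hkpos : ∀ i, 0 < k i) (hlpos : ∀ i, 0 < ℓ i)
    (hkb : ∀ i, k i ≤ b) (hlb : ∀ i, ℓ i ≤ b)
    (h1 : 9 * b ^ 2 ≤ n₁) (h2 : 9 * b ^ 2 ≤ n₂)
    (G : Fin m → ZMod n₁ → ZMod n₂ → Prop)
    (hG : ∀ i j a c a' c', G i a c → G j a' c' →
      ArcNear n₁ a (k i) a' (k j) ∨ ArcNear n₂ c (ℓ i) c' (ℓ j)) :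
    (∀ j, (Finset.univ.filter (fun p : ZMod n₁ × ZMod n₂ => G j p.1 p.2)).card ≤ k j * n₂) ∨
    (∀ j, (Finset.univ.filter (fun p : ZMod n₁ × ZMod n₂ => G j p.1 p.2)).card ≤ ℓ j * n₁) := by
  by_cases hne : ∃ i a c, G i a c
  swap
  · push Not at hne
    left; intro j
    simp [hne]
  obtain ⟨i₀, a₀, c₀, h₀⟩ := hne
  by_cases hs : ∀ i a c, G i a c → ∃ d : ℤ, (d : ZMod n₁) = a - a₀ ∧ -(2 * b : ℤ) < d ∧ d < 2 * b
  · exact Or.inl (torus_strip k ℓ hkpos hkb hlb h1 h2 G hG a₀ hs)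
  by_cases ht : ∀ i c a, G i a c → ∃ d : ℤ, (d : ZMod n₂) = c - c₀ ∧ -(2 * b : ℤ) < d ∧ d < 2 * b
  · right
    intro j
    have := torus_strip ℓ k hlpos hlb hkb h2 h1 (fun i c a => G i a c)
      (fun i j c a c' a' h h' => (hG i j a c a' c' h h').symm) c₀ ht j
    refine le_trans (le_of_eq ?_) this
    refine Finset.card_bij (fun p _ => (p.2, p.1)) ?_ ?_ ?_
    · simp
    · rintro ⟨a, b⟩ _ ⟨c, d⟩ _ h
      simp at h ⊢; tauto
    · rintro ⟨a, b⟩ h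
      exact ⟨(b, a), by simpa using h, rfl⟩
  exfalso
  push Not at hs ht
  obtain ⟨i, a, c, hp, hpn⟩ := hs
  obtain ⟨j, c', a', hq, hqn⟩ := ht
  have b0 := hkb i₀; have b1 := hkb i; have b2 := hkb j
  have b3 := hlb i₀; have b4 := hlb i; have b5 := hlb j
  have hp' : ArcNear n₂ c₀ (ℓ i₀) c (ℓ i) := by
    refine (hG _ _ _ _ _ _ h₀ hp).resolve_left ?_
    rintro ⟨d, hd, h3, h4⟩
    have := hpn d hd (by omega)
    omega
  have hq' : ArcNear n₁ a₀ (k i₀) a' (k j) := by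
    refine (hG _ _ _ _ _ _ h₀ hq).resolve_right ?_
    rintro ⟨d, hd, h3, h4⟩
    have := hqn d hd (by omega)
    omega
  obtain ⟨d, hd, h3, h4⟩ := hp'
  obtain ⟨e, he, h5, h6⟩ := hq'
  rcases hG _ _ _ _ _ _ hp hq with ⟨f, hf, h7, h8⟩ | ⟨f, hf, h7, h8⟩
  · have := hpn (e - f) (by push_cast; rw [he, hf]; ring) (by omega)
    omega
  · have := hqn (d + f) (by push_cast; rw [hd, hf]; ring) (by omega)
    omega

/-- `A` restricted to `X` is the arc of length `k` starting at `a` in the cyclic order `σ`. -/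
def IsArc {α : Type*} (X : Finset α) {n : ℕ} (σ : ↥X ≃ ZMod n) (a : ZMod n) (k : ℕ)
    (A : Finset α) : Prop :=
  ∀ x : ↥X, x.1 ∈ A ↔ (σ x - a).val < k

lemma IsArc.near {α : Type*} {X : Finset α} {n : ℕ} [NeZero n] {σ : ↥X ≃ ZMod n} {a a' : ZMod n}
    {k k' : ℕ} {A B : Finset α} (hA : IsArc X σ a k A) (hB : IsArc X σ a' k' B)
    (x : α) (hx : x ∈ X) (hxA : x ∈ A) (hxB : x ∈ B) : ArcNear n a k a' k' := by
  have h1 := (hA ⟨x, hx⟩).mp hxA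
  have h2 := (hB ⟨x, hx⟩).mp hxB
  refine ⟨((σ ⟨x, hx⟩ - a).val : ℤ) - ((σ ⟨x, hx⟩ - a').val : ℤ), ?_, by omega, by omega⟩
  push_cast
  rw [ZMod.natCast_zmod_val, ZMod.natCast_zmod_val]
  ring

open Classical in
lemma card_isArc {α : Type*} [DecidableEq α] (X : Finset α) {n : ℕ} [NeZero n] (hn : X.card = n)
    (a : ZMod n) (k : ℕ) (A : Finset α) (hA : (A ∩ X).card = k) :
    (Finset.univ.filter (fun σ : ↥X ≃ ZMod n => IsArc X σ a k A)).card
      = k.factorial * (n - k).factorial := by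
  have hcard : Fintype.card ↥X = n := by simpa using hn
  let s : Finset ↥X := Finset.univ.filter (fun x => x.1 ∈ A)
  have hs : s.card = k := by
    rw [← hA, ← Finset.card_map (Function.Embedding.subtype _)]
    congr 1
    ext x
    simp [s, and_comm]
  have key := Numbering.card_prefixed s
  rw [hs, hcard] at key
  rw [← key]
  let e : ZMod n ≃ Fin (Fintype.card ↥X) :=
    { toFun := fun z => ⟨z.val, by rw [hcard]; exact ZMod.val_lt z⟩
      invFun := fun i => (i.val : ZMod n)
      left_inv := fun z => by simp
      right_inv := fun i => by
        ext
        simp only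
        exact ZMod.val_cast_of_lt (by rw [← hcard]; exact i.2) }
  let E : (↥X ≃ ZMod n) ≃ Numbering ↥X :=
    Equiv.equivCongr (Equiv.refl _) ((Equiv.subRight a).trans e)
  refine Finset.card_equiv E ?_
  intro σ
  rw [Finset.mem_filter, Numbering.mem_prefixed]
  simp only [Finset.mem_univ, true_and]
  unfold Numbering.IsPrefix IsArc
  refine forall_congr' fun x => ?_
  rw [hs]
  simp [s, E, e]

lemma choose_fact_ratio (n k : ℕ) (hk : 0 < k) (hkn : k ≤ n) :
    (n.choose k : ℚ) = n.factorial / (k.factorial * (n - k).factorial : ℕ) ∧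
    ((n - 1).choose (k - 1) : ℚ) = k / n * (n.factorial / (k.factorial * (n - k).factorial : ℕ)) := by
  have h1 : (n.choose k : ℚ) = n.factorial / (k.factorial * (n - k).factorial : ℕ) := by
    rw [Nat.cast_choose ℚ hkn]; push_cast; rfl
  refine ⟨h1, ?_⟩
  rw [← h1]
  obtain ⟨k, rfl⟩ : ∃ t, k = t + 1 := ⟨k - 1, by omega⟩
  obtain ⟨n, rfl⟩ : ∃ t, n = t + 1 := ⟨n - 1, by omega⟩
  have := Nat.add_one_mul_choose_eq n k
  have h : ((n + 1 : ℕ) : ℚ) * n.choose k = (n + 1).choose (k + 1) * (k + 1 : ℕ) := by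
    exact_mod_cast this
  have hn : ((n + 1 : ℕ) : ℚ) ≠ 0 := by positivity
  simp only [Nat.add_sub_cancel]
  field_simp
  linarith

/-- The trace of `A` on both cycles is a pair of arcs. -/
def IsArcPair {α : Type*} (X₁ X₂ : Finset α) {n₁ n₂ : ℕ} (σ : ↥X₁ ≃ ZMod n₁) (τ : ↥X₂ ≃ ZMod n₂)
    (k l : ℕ) (A : Finset α) (a : ZMod n₁) (c : ZMod n₂) : Prop :=
  IsArc X₁ σ a k A ∧ IsArc X₂ τ c l A

/-- Some member of the family has the given pair of arcs as its trace. -/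
def HasArcPair {α : Type*} (X₁ X₂ : Finset α) {n₁ n₂ : ℕ} (σ : ↥X₁ ≃ ZMod n₁) (τ : ↥X₂ ≃ ZMod n₂)
    (k l : ℕ) (H : Finset (Finset α)) (a : ZMod n₁) (c : ZMod n₂) : Prop :=
  ∃ A ∈ H, IsArcPair X₁ X₂ σ τ k l A a c

open Classical in
/-- The number of arc pairs coming from the family. -/
noncomputable def arcCount {α : Type*} (X₁ X₂ : Finset α) {n₁ n₂ : ℕ} [NeZero n₁] [NeZero n₂]
    (σ : ↥X₁ ≃ ZMod n₁) (τ : ↥X₂ ≃ ZMod n₂)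
    (k l : ℕ) (H : Finset (Finset α)) : ℕ :=
  (Finset.univ.filter (fun p : ZMod n₁ × ZMod n₂ => HasArcPair X₁ X₂ σ τ k l H p.1 p.2)).card

open Classical in
lemma double_count {α : Type*} [DecidableEq α] (X₁ X₂ : Finset α)
    (n₁ n₂ : ℕ) [NeZero n₁] [NeZero n₂] (hn₁ : X₁.card = n₁) (hn₂ : X₂.card = n₂)
    (k l : ℕ) (H : Finset (Finset α)) (hsub : ∀ A ∈ H, A ⊆ X₁ ∪ X₂)
    (hc : ∀ A ∈ H, (A ∩ X₁).card = k ∧ (A ∩ X₂).card = l) :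
    H.card * (n₁ * n₂ * ((k.factorial * (n₁ - k).factorial) * (l.factorial * (n₂ - l).factorial)))
      ≤ ∑ σ : ↥X₁ ≃ ZMod n₁, ∑ τ : ↥X₂ ≃ ZMod n₂, arcCount X₁ X₂ σ τ k l H := by
  have step1 : ∀ A ∈ H, n₁ * n₂ * ((k.factorial * (n₁ - k).factorial) * (l.factorial * (n₂ - l).factorial)) =
      ∑ σ, ∑ τ, ∑ p : ZMod n₁ × ZMod n₂, if IsArcPair X₁ X₂ σ τ k l A p.1 p.2 then 1 else 0 := by
    intro A hA
    have hc := hc A hA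
    have e1 : ∀ σ : ↥X₁ ≃ ZMod n₁, ∑ τ : ↥X₂ ≃ ZMod n₂, ∑ p : ZMod n₁ × ZMod n₂,
        (if IsArcPair X₁ X₂ σ τ k l A p.1 p.2 then 1 else 0) = ∑ p : ZMod n₁ × ZMod n₂,
          (if IsArc X₁ σ p.1 k A then 1 else 0) * (l.factorial * (n₂ - l).factorial) := by
      intro σ
      rw [Finset.sum_comm]
      refine Finset.sum_congr rfl fun p _ => ?_
      have := card_isArc X₂ hn₂ p.2 l A hc.2
      rw [← this, Finset.card_filter, Finset.mul_sum]
      refine Finset.sum_congr rfl fun τ _ => ?_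
      have hiff : IsArcPair X₁ X₂ σ τ k l A p.1 p.2 ↔
          IsArc X₁ σ p.1 k A ∧ IsArc X₂ τ p.2 l A := Iff.rfl
      by_cases u : IsArc X₁ σ p.1 k A <;> by_cases v : IsArc X₂ τ p.2 l A <;> simp [hiff, u, v]
    simp only [e1]
    rw [Finset.sum_comm]
    have e2 : ∀ p : ZMod n₁ × ZMod n₂, ∑ σ : ↥X₁ ≃ ZMod n₁,
        (if IsArc X₁ σ p.1 k A then 1 else 0) * (l.factorial * (n₂ - l).factorial) = (k.factorial * (n₁ - k).factorial) * (l.factorial * (n₂ - l).factorial) := by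
      intro p
      have := card_isArc X₁ hn₁ p.1 k A hc.1
      rw [← Finset.sum_mul, ← this, Finset.card_filter]
    simp only [e2]
    simp [ZMod.card]
  have step2 : H.card * (n₁ * n₂ * ((k.factorial * (n₁ - k).factorial) * (l.factorial * (n₂ - l).factorial))) = ∑ A ∈ H,
      ∑ σ, ∑ τ, ∑ p : ZMod n₁ × ZMod n₂, if IsArcPair X₁ X₂ σ τ k l A p.1 p.2 then 1 else 0 := by
    rw [← Finset.sum_congr rfl step1]
    simp
  rw [step2, Finset.sum_comm]
  refine Finset.sum_le_sum fun σ _ => ?_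
  rw [Finset.sum_comm]
  refine Finset.sum_le_sum fun τ _ => ?_
  rw [Finset.sum_comm]
  unfold arcCount
  rw [Finset.card_filter]
  refine Finset.sum_le_sum fun p _ => ?_
  rw [← Finset.card_filter]
  split_ifs with hp
  · rw [Finset.card_le_one]
    intro A hA B hB
    obtain ⟨hA, hA1, hA2⟩ := Finset.mem_filter.mp hA
    obtain ⟨hB, hB1, hB2⟩ := Finset.mem_filter.mp hB
    have hAs := hsub A hA
    have hBs := hsub B hB
    have aux : ∀ x, x ∈ X₁ ∪ X₂ → (x ∈ A ↔ x ∈ B) := by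
      intro x hx
      rcases Finset.mem_union.mp hx with h | h
      · exact (hA1 ⟨x, h⟩).trans (hB1 ⟨x, h⟩).symm
      · exact (hA2 ⟨x, h⟩).trans (hB2 ⟨x, h⟩).symm
    ext x
    exact ⟨fun h => (aux x (hAs h)).mp h, fun h => (aux x (hBs h)).mpr h⟩
  · rw [Nat.le_zero, Finset.card_eq_zero, Finset.filter_eq_empty_iff]
    intro A hA hQ
    exact hp ⟨A, hA, hQ⟩

theorem stmt12 {α : Type*} [DecidableEq α] (X₁ X₂ : Finset α) (hdisj : Disjoint X₁ X₂)
    (n₁ n₂ m b : ℕ) (hn₁ : X₁.card = n₁) (hn₂ : X₂.card = n₂)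
    (k ℓ : Fin m → ℕ) (hkpos : ∀ i, 0 < k i) (hlpos : ∀ i, 0 < ℓ i)
    (hb : b = Finset.univ.sup (fun i => max (k i) (ℓ i)))
    (h1 : 9 * b ^ 2 ≤ n₁) (h2 : 9 * b ^ 2 ≤ n₂)
    (F : Finset (Finset α)) (hsub : ∀ A ∈ F, A ⊆ X₁ ∪ X₂)
    (hsizes : ∀ A ∈ F, ∃ i, (A ∩ X₁).card = k i ∧ (A ∩ X₂).card = ℓ i)
    (hint : ∀ A ∈ F, ∀ B ∈ F, (A ∩ B).Nonempty) :
    F.card ≤ max (∑ i, n₁.choose (k i) * (n₂ - 1).choose (ℓ i - 1))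
                 (∑ i, (n₁ - 1).choose (k i - 1) * n₂.choose (ℓ i)) := by
  rcases F.eq_empty_or_nonempty with rfl | ⟨A₀, hA₀⟩
  · simp
  obtain ⟨i₀, -⟩ := hsizes A₀ hA₀
  have hle : ∀ i, max (k i) (ℓ i) ≤ b := fun i => by
    rw [hb]; exact Finset.le_sup (f := fun i => max (k i) (ℓ i)) (Finset.mem_univ i)
  have hkb : ∀ i, k i ≤ b := fun i => (le_max_left _ _).trans (hle i)
  have hlb : ∀ i, ℓ i ≤ b := fun i => (le_max_right _ _).trans (hle i)
  have hb1 : 1 ≤ b := (hkpos i₀).trans_le (hkb i₀)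
  have hbb : b ≤ b ^ 2 := by nlinarith
  have : NeZero n₁ := ⟨by omega⟩
  have : NeZero n₂ := ⟨by omega⟩
  have hex : ∀ A, ∃ i, A ∈ F → (A ∩ X₁).card = k i ∧ (A ∩ X₂).card = ℓ i := fun A => by
    by_cases h : A ∈ F
    · obtain ⟨i, hi⟩ := hsizes A h
      exact ⟨i, fun _ => hi⟩
    · exact ⟨i₀, fun h' => absurd h' h⟩
  choose idx hidx using hex
  let Fi : Fin m → Finset (Finset α) := fun i => F.filter (fun A => idx A = i)
  let g : (↥X₁ ≃ ZMod n₁) → (↥X₂ ≃ ZMod n₂) → Fin m → ℕ := fun σ τ i =>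
    arcCount X₁ X₂ σ τ (k i) (ℓ i) (Fi i)
  have hmain : ∀ σ τ, (∀ j, g σ τ j ≤ k j * n₂) ∨ (∀ j, g σ τ j ≤ ℓ j * n₁) := by
    intro σ τ
    refine torus_main k ℓ hkpos hlpos hkb hlb h1 h2
      (fun i a c => HasArcPair X₁ X₂ σ τ (k i) (ℓ i) (Fi i) a c) ?_
    rintro i j a c a' c' ⟨A, hA, hA1, hA2⟩ ⟨B, hB, hB1, hB2⟩
    have hAF := (Finset.mem_filter.mp hA).1
    have hBF := (Finset.mem_filter.mp hB).1
    obtain ⟨x, hx⟩ := hint A hAF B hBF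
    rw [Finset.mem_inter] at hx
    rcases Finset.mem_union.mp (hsub A hAF hx.1) with h | h
    · exact Or.inl (hA1.near hB1 x h hx.1 hx.2)
    · exact Or.inr (hA2.near hB2 x h hx.1 hx.2)
  let P₁ : Fin m → ℕ := fun i => (k i).factorial * (n₁ - k i).factorial
  let P₂ : Fin m → ℕ := fun i => (ℓ i).factorial * (n₂ - ℓ i).factorial
  have hcount : ∀ i, (Fi i).card * (n₁ * n₂ * (P₁ i * P₂ i)) ≤ ∑ σ, ∑ τ, g σ τ i := by
    intro i
    refine double_count X₁ X₂ n₁ n₂ hn₁ hn₂ (k i) (ℓ i) (Fi i) (fun A hA => ?_) (fun A hA => ?_)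
    · exact hsub A (Finset.mem_filter.mp hA).1
    · obtain ⟨hAF, hi⟩ := Finset.mem_filter.mp hA
      have hc := hidx A hAF
      rwa [hi] at hc
  have hFcard : F.card = ∑ i, (Fi i).card :=
    Finset.card_eq_sum_card_fiberwise (f := idx) (t := Finset.univ) (by simp)
  have hP₁ : ∀ i, (0 : ℚ) < P₁ i := fun i => by simp only [P₁]; positivity
  have hP₂ : ∀ i, (0 : ℚ) < P₂ i := fun i => by simp only [P₂]; positivity
  have hn₁q : (0 : ℚ) < n₁ := by exact_mod_cast NeZero.pos n₁
  have hn₂q : (0 : ℚ) < n₂ := by exact_mod_cast NeZero.pos n₂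
  let W : Fin m → ℚ := fun i => (n₁ * n₂ * (P₁ i * P₂ i) : ℚ)
  have hW : ∀ i, 0 < W i := fun i =>
    mul_pos (mul_pos hn₁q hn₂q) (mul_pos (hP₁ i) (hP₂ i))
  have hcσ : Fintype.card (↥X₁ ≃ ZMod n₁) = n₁.factorial := by
    rw [Fintype.card_equiv (Fintype.equivOfCardEq (by simp [ZMod.card, hn₁]))]; simp [hn₁]
  have hcτ : Fintype.card (↥X₂ ≃ ZMod n₂) = n₂.factorial := by
    rw [Fintype.card_equiv (Fintype.equivOfCardEq (by simp [ZMod.card, hn₂]))]; simp [hn₂]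
  have hq : (F.card : ℚ) ≤ n₁.factorial * n₂.factorial *
      max (∑ i, (ℓ i * n₁ : ℚ) / W i) (∑ i, (k i * n₂ : ℚ) / W i) := by
    calc (F.card : ℚ) = ∑ i, ((Fi i).card : ℚ) := by rw [hFcard]; push_cast; rfl
      _ ≤ ∑ i, (∑ σ, ∑ τ, (g σ τ i : ℚ)) / W i := by
          refine Finset.sum_le_sum fun i _ => ?_
          rw [le_div_iff₀ (hW i)]
          simp only [W]
          exact_mod_cast hcount i
      _ = ∑ σ, ∑ τ, ∑ i, (g σ τ i : ℚ) / W i := by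
          simp only [Finset.sum_div]
          rw [Finset.sum_comm]
          refine Finset.sum_congr rfl fun σ _ => ?_
          rw [Finset.sum_comm]
      _ ≤ ∑ _σ : ↥X₁ ≃ ZMod n₁, ∑ _τ : ↥X₂ ≃ ZMod n₂,
            max (∑ i, (ℓ i * n₁ : ℚ) / W i) (∑ i, (k i * n₂ : ℚ) / W i) := by
          refine Finset.sum_le_sum fun σ _ => Finset.sum_le_sum fun τ _ => ?_
          rcases hmain σ τ with h | h
          · refine le_max_of_le_right (Finset.sum_le_sum fun i _ => ?_)
            exact div_le_div_of_nonneg_right (by exact_mod_cast h i) (hW i).le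
          · refine le_max_of_le_left (Finset.sum_le_sum fun i _ => ?_)
            exact div_le_div_of_nonneg_right (by exact_mod_cast h i) (hW i).le
      _ = _ := by
          simp only [Finset.sum_const, Finset.card_univ, hcσ, hcτ, nsmul_eq_mul]
          ring
  have hk1 : ∀ i, k i ≤ n₁ := fun i => by have := hkb i; omega
  have hl1 : ∀ i, ℓ i ≤ n₂ := fun i => by have := hlb i; omega
  have hfinal : (F.card : ℚ) ≤
      max (∑ i, (n₁.choose (k i) : ℚ) * (n₂ - 1).choose (ℓ i - 1))
                 (∑ i, ((n₁ - 1).choose (k i - 1) : ℚ) * n₂.choose (ℓ i)) := by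
    refine hq.trans (le_of_eq ?_)
    rw [mul_max_of_nonneg _ _ (by positivity), Finset.mul_sum, Finset.mul_sum]
    congr 1
    · refine Finset.sum_congr rfl fun i _ => ?_
      rw [(choose_fact_ratio n₁ (k i) (hkpos i) (hk1 i)).1,
        (choose_fact_ratio n₂ (ℓ i) (hlpos i) (hl1 i)).2]
      change _ = (n₁.factorial : ℚ) / (P₁ i) * (ℓ i / n₂ * (n₂.factorial / P₂ i))
      have := (hP₁ i).ne'; have := (hP₂ i).ne'
      simp only [W]
      field_simp
    · refine Finset.sum_congr rfl fun i _ => ?_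
      rw [(choose_fact_ratio n₁ (k i) (hkpos i) (hk1 i)).2,
        (choose_fact_ratio n₂ (ℓ i) (hlpos i) (hl1 i)).1]
      change _ = (k i / n₁ * ((n₁.factorial : ℚ) / (P₁ i))) * (n₂.factorial / P₂ i)
      have := (hP₁ i).ne'; have := (hP₂ i).ne'
      simp only [W]
      field_simp
  exact_mod_cast hfinal
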